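/- For every n ≥ 8 and every x ∈ [0,1], the third-order modified Durrmeyer operator satisfies D̃_n^{M,3}(t − x; x) = D̃_n^{M,3}((t − x)^2; x) = D̃_n^{M,3}((t − x)^3; x) = 0; moreover, if f is ten times continuously differentiable on [0,1] and x ∈ [0,1], then D̃_n^{M,3}(f; x) − f(x) = O(1/n^3) as n → ∞, i.e. there exist C > 0 and N such that |D̃_n^{M,3}(f; x) − f(x)| ≤ C/n^3 for all n ≥ N. -/

import Mathlib

open Filter Topology

/-- Bernstein basis polynomial `p_{n,k}(x)`, zero when `k < 0` or `k > n`. -/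
noncomputable def bern (n : ℕ) (k : ℤ) (x : ℝ) : ℝ :=
  if 0 ≤ k ∧ k ≤ (n : ℤ) then (n.choose k.toNat : ℝ) * x ^ k.toNat * (1 - x) ^ (n - k.toNat)
  else 0

/-- The polynomial `b̃(x,n)` of the third-order construction. -/
noncomputable def bT (n : ℕ) (x : ℝ) : ℝ :=
  1 / 2 * (n : ℝ) ^ 2 * x ^ 4 + (-(n : ℝ) ^ 2 - 3 * (n : ℝ) - 16) * x ^ 3
    + (1 / 2 * (n : ℝ) ^ 2 + 29 / 6 * (n : ℝ) + 89 / 3) * x ^ 2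
    + (-(53 / 3) - 11 / 6 * (n : ℝ)) * x + 10 / 3

/-- The polynomial `d̃(x,n)` of the third-order construction. -/
noncomputable def dT (n : ℕ) (x : ℝ) : ℝ :=
  -(2 * (n : ℝ) ^ 2) * x ^ 4 + (4 * (n : ℝ) ^ 2 + 6 * (n : ℝ) + 32) * x ^ 3
    + (-(2 * (n : ℝ) ^ 2) - 28 / 3 * (n : ℝ) - 161 / 3) * x ^ 2
    + (80 / 3 + 10 / 3 * (n : ℝ)) * x - 10 / 3

/-- The polynomial `ẽ(x,n)` of the third-order construction. -/
noncomputable def eT (n : ℕ) (x : ℝ) : ℝ :=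
  3 * (n : ℝ) ^ 2 * (x * (1 - x)) ^ 2

/-- Third-order modified Bernstein basis `p_{n,k}^{M,3}(x)`. -/
noncomputable def pM3 (n : ℕ) (k : ℤ) (x : ℝ) : ℝ :=
  bT n x * bern (n - 4) k x + dT n x * bern (n - 4) (k - 1) x
    + eT n x * bern (n - 4) (k - 2) x + dT n (1 - x) * bern (n - 4) (k - 3) x
    + bT n (1 - x) * bern (n - 4) (k - 4) x

/-- Third-order modified Durrmeyer operator `D̃_n^{M,3}(f;x)`. -/
noncomputable def DM3 (n : ℕ) (f : ℝ → ℝ) (x : ℝ) : ℝ :=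
  ((n : ℝ) + 1) * ∑ k ∈ Finset.range (n + 1),
    pM3 n k x * ∫ t in (0:ℝ)..1, bern n k t * f t

/-!
Write `M_{m, α, β}` for the Durrmeyer operator of degree `m` whose Beta weights are shifted by
`(α, β)`. Then `DM3 (m + 4)` is a combination of the five operators `M_{m, i, 4 - i}`. Integration
by parts turns the difference of two neighbouring shifts into an operator of the same kind applied
to the derivative, divided by a number of size `m`. All five thus reduce to the shifts `(j, 4)`
applied to `f⁽ʲ⁾`, and

  `DM3 (m + 4) f = ∑ j ≤ 4, A_j / ((m + 6) ⋯ (m + 5 + j)) * M_{m, j, 4} f⁽ʲ⁾`.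

The polynomials `b̃`, `d̃`, `ẽ` are such that `A_j` grows only like `n ^ ⌊j / 2⌋` rather than
`n ^ 2`. Stein's identity for the Beta distribution gives a recurrence for the central moments of
`M_{m, α, β}`, hence their closed forms in low order and the bound `O(m ^ -⌈s / 2⌉)` in order `s`.
Consequently the central moments of `DM3` of orders `1, 2, 3` vanish, those of orders `4` and `5`
are `O(n⁻³)`, and so is the image of a Taylor remainder of order `6`.
-/

open Finset.HasAntidiagonal (antidiagonal mem_antidiagonal)
open Finset (range)
open Set (Icc)

/-- The Bernstein basis polynomial `p_{i+j,i}`, indexed by its two exponents so that no truncated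
subtraction occurs and every pair of indices is admissible. -/
noncomputable def bernsteinBasis (i j : ℕ) (x : ℝ) : ℝ :=
  ((i + j).choose i : ℝ) * x ^ i * (1 - x) ^ j

@[fun_prop]
theorem continuous_bernsteinBasis (i j : ℕ) : Continuous (bernsteinBasis i j) := by
  unfold bernsteinBasis
  fun_prop

theorem bernsteinBasis_nonneg (i j : ℕ) {x : ℝ} (hx : x ∈ Icc 0 1) : 0 ≤ bernsteinBasis i j x :=
  mul_nonneg (mul_nonneg (Nat.cast_nonneg _) (pow_nonneg hx.1 _))
    (pow_nonneg (sub_nonneg.2 hx.2) _)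

theorem sum_bernsteinBasis (m : ℕ) (x : ℝ) :
    ∑ p ∈ antidiagonal m, bernsteinBasis p.1 p.2 x = 1 := by
  have h := (Commute.all x (1 - x)).add_pow' m
  rw [add_sub_cancel, one_pow] at h
  rw [h]
  refine Finset.sum_congr rfl fun p hp => ?_
  rw [bernsteinBasis, mem_antidiagonal.1 hp, nsmul_eq_mul, mul_assoc]

theorem succ_mul_bernsteinBasis_succ_left (i j : ℕ) (x : ℝ) :
    ((i : ℝ) + 1) * bernsteinBasis (i + 1) j x = (i + j + 1) * x * bernsteinBasis i j x := by
  have h : ((i + j + 1 : ℕ) : ℝ) * (i + j).choose i = (i + j + 1).choose (i + 1) * (i + 1 : ℕ) := by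
    exact_mod_cast Nat.add_one_mul_choose_eq (i + j) i
  push_cast at h
  rw [bernsteinBasis, bernsteinBasis, add_right_comm, pow_succ]
  linear_combination -x ^ i * x * (1 - x) ^ j * h

theorem bernsteinBasis_one_sub (i j : ℕ) (x : ℝ) :
    bernsteinBasis i j (1 - x) = bernsteinBasis j i x := by
  rw [bernsteinBasis, bernsteinBasis, sub_sub_cancel, add_comm j i, Nat.choose_symm_add]
  ring

theorem succ_mul_bernsteinBasis_succ_right (i j : ℕ) (x : ℝ) :
    ((j : ℝ) + 1) * bernsteinBasis i (j + 1) x = (i + j + 1) * (1 - x) * bernsteinBasis i j x := by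
  have h := succ_mul_bernsteinBasis_succ_left j i (1 - x)
  rwa [bernsteinBasis_one_sub, bernsteinBasis_one_sub, add_comm (j : ℝ) i] at h

theorem hasDerivAt_bernsteinBasis (i j : ℕ) (x : ℝ) :
    HasDerivAt (bernsteinBasis (i + 1) (j + 1))
      ((i + j + 2) * (bernsteinBasis i (j + 1) x - bernsteinBasis (i + 1) j x)) x := by
  have hl : ((i + j + 2 : ℕ) : ℝ) * (i + (j + 1)).choose i =
      (i + 1 + (j + 1)).choose (i + 1) * (i + 1 : ℕ) := by
    rw [show i + 1 + (j + 1) = i + (j + 1) + 1 by ring]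
    exact_mod_cast Nat.add_one_mul_choose_eq (i + (j + 1)) i
  have hr : ((i + 1 + j).choose (i + 1) : ℝ) * (i + j + 2 : ℕ) =
      (i + 1 + (j + 1)).choose (i + 1) * (j + 1 : ℕ) := by
    have := Nat.choose_mul_succ_eq (i + 1 + j) (i + 1)
    rw [show i + 1 + j + 1 - (i + 1) = j + 1 by omega] at this
    rw [show i + j + 2 = i + 1 + j + 1 by ring]
    exact_mod_cast this
  have h := (((hasDerivAt_id x).pow (i + 1)).const_mul
    ((i + 1 + (j + 1)).choose (i + 1) : ℝ)).mul (((hasDerivAt_id x).const_sub 1).pow (j + 1))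
  push_cast at hl hr
  refine h.congr_deriv ?_
  simp only [bernsteinBasis, id, Pi.pow_apply, Nat.add_sub_cancel, Nat.cast_succ]
  linear_combination -x ^ i * (1 - x) ^ (j + 1) * hl + x ^ (i + 1) * (1 - x) ^ j * hr

theorem sum_bernsteinBasis_mul_sub (m : ℕ) (h : ℕ → ℕ → ℝ) (x : ℝ) :
    ∑ p ∈ antidiagonal (m + 1), bernsteinBasis p.1 p.2 x * ((p.1 - (m + 1) * x) * h p.1 p.2) =
      (m + 1) * (x * (1 - x)) * ∑ p ∈ antidiagonal m,
        bernsteinBasis p.1 p.2 x * (h (p.1 + 1) p.2 - h p.1 (p.2 + 1)) := by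
  have hsplit : ∀ p ∈ antidiagonal (m + 1),
      bernsteinBasis p.1 p.2 x * ((p.1 - (m + 1) * x) * h p.1 p.2) =
        (1 - x) * (p.1 * bernsteinBasis p.1 p.2 x * h p.1 p.2) -
          x * (p.2 * bernsteinBasis p.1 p.2 x * h p.1 p.2) := fun p hp => by
    have : (p.1 : ℝ) + p.2 = m + 1 := by exact_mod_cast mem_antidiagonal.1 hp
    rw [← this]
    ring
  rw [Finset.sum_congr rfl hsplit, Finset.sum_sub_distrib, ← Finset.mul_sum, ← Finset.mul_sum,
    Finset.Nat.sum_antidiagonal_succ, Finset.Nat.sum_antidiagonal_succ']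
  simp only [Nat.cast_zero, zero_mul, zero_add, Nat.cast_succ, succ_mul_bernsteinBasis_succ_left,
    succ_mul_bernsteinBasis_succ_right, Finset.mul_sum, ← Finset.sum_sub_distrib]
  refine Finset.sum_congr rfl fun p hp => ?_
  have : (p.1 : ℝ) + p.2 = m := by exact_mod_cast mem_antidiagonal.1 hp
  rw [this]
  ring

/-- The mean of `g` under the Beta distribution with parameters `i + 1` and `j + 1`, whose density
is `(i + j + 1) * bernsteinBasis i j`. -/
noncomputable def betaMean (i j : ℕ) (g : ℝ → ℝ) : ℝ :=
  ((i : ℝ) + j + 1) * ∫ t in (0 : ℝ)..1, bernsteinBasis i j t * g t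

section betaMean

variable {i j : ℕ} {f g g' : ℝ → ℝ}

theorem intervalIntegrable_bernsteinBasis_mul (hg : ContinuousOn g (Icc 0 1)) :
    IntervalIntegrable (fun t => bernsteinBasis i j t * g t) MeasureTheory.volume 0 1 :=
  ((continuous_bernsteinBasis i j).continuousOn.mul hg).intervalIntegrable_of_Icc zero_le_one

theorem betaMean_congr (h : Set.EqOn f g (Icc 0 1)) : betaMean i j f = betaMean i j g := by
  rw [← Set.uIcc_of_le (zero_le_one' ℝ)] at h
  rw [betaMean, betaMean, intervalIntegral.integral_congr fun t ht =>
    congrArg (bernsteinBasis i j t * ·) (h ht)]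

theorem betaMean_add (hf : ContinuousOn f (Icc 0 1)) (hg : ContinuousOn g (Icc 0 1)) :
    betaMean i j (fun t => f t + g t) = betaMean i j f + betaMean i j g := by
  simp only [betaMean, mul_add]
  rw [intervalIntegral.integral_add (intervalIntegrable_bernsteinBasis_mul hf)
    (intervalIntegrable_bernsteinBasis_mul hg), mul_add]

theorem betaMean_const_mul (c : ℝ) (g : ℝ → ℝ) :
    betaMean i j (fun t => c * g t) = c * betaMean i j g := by
  simp only [betaMean, mul_left_comm _ c, intervalIntegral.integral_const_mul]

theorem abs_betaMean_le (hf : ContinuousOn f (Icc 0 1)) (hg : ContinuousOn g (Icc 0 1))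
    (h : ∀ t ∈ Icc (0 : ℝ) 1, |f t| ≤ g t) : |betaMean i j f| ≤ betaMean i j g := by
  rw [betaMean, betaMean, abs_mul, abs_of_nonneg (by positivity : (0 : ℝ) ≤ i + j + 1)]
  refine mul_le_mul_of_nonneg_left ?_ (by positivity)
  refine (intervalIntegral.abs_integral_le_integral_abs zero_le_one).trans
    (intervalIntegral.integral_mono_on zero_le_one (intervalIntegrable_bernsteinBasis_mul hf).abs
      (intervalIntegrable_bernsteinBasis_mul hg) fun t ht => ?_)
  rw [abs_mul, abs_of_nonneg (bernsteinBasis_nonneg i j ht)]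
  exact mul_le_mul_of_nonneg_left (h t ht) (bernsteinBasis_nonneg i j ht)

theorem betaMean_succ_left_sub_succ_right
    (hg : ∀ t ∈ Icc (0 : ℝ) 1, HasDerivWithinAt g (g' t) (Icc 0 1) t)
    (hg' : ContinuousOn g' (Icc 0 1)) :
    betaMean (i + 1) j g - betaMean i (j + 1) g =
      betaMean (i + 1) (j + 1) g' / (i + j + 3) := by
  have hgc : ContinuousOn g (Icc 0 1) := fun t ht => (hg t ht).continuousWithinAt
  have hparts := intervalIntegral.integral_mul_deriv_eq_deriv_mul_of_hasDerivWithinAt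
    (a := (0 : ℝ)) (b := 1) (u := bernsteinBasis (i + 1) (j + 1)) (v := g) (v' := g')
    (fun t _ => (hasDerivAt_bernsteinBasis i j t).hasDerivWithinAt)
    (by rwa [Set.uIcc_of_le zero_le_one])
    (Continuous.intervalIntegrable (by fun_prop) _ _)
    (hg'.intervalIntegrable_of_Icc zero_le_one)
  have hzero : bernsteinBasis (i + 1) (j + 1) 0 = 0 := by simp [bernsteinBasis]
  have hone : bernsteinBasis (i + 1) (j + 1) 1 = 0 := by simp [bernsteinBasis]
  have hsplit : ∫ t in (0 : ℝ)..1, (i + j + 2) *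
      (bernsteinBasis i (j + 1) t - bernsteinBasis (i + 1) j t) * g t =
      (i + j + 2) * ((∫ t in (0 : ℝ)..1, bernsteinBasis i (j + 1) t * g t) -
        ∫ t in (0 : ℝ)..1, bernsteinBasis (i + 1) j t * g t) := by
    simp only [mul_assoc, sub_mul, intervalIntegral.integral_const_mul]
    rw [intervalIntegral.integral_sub (intervalIntegrable_bernsteinBasis_mul hgc)
      (intervalIntegrable_bernsteinBasis_mul hgc)]
  rw [hzero, hone, hsplit] at hparts
  have hpos : (i + j + 3 : ℝ) ≠ 0 := by positivity
  rw [eq_div_iff hpos, betaMean, betaMean, betaMean, hparts]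
  push_cast
  ring

theorem betaMean_one : ∀ i j : ℕ, betaMean i j (fun _ => 1) = 1
  | 0, j => by
    have hpow : ∫ t in (0 : ℝ)..1, (1 - t) ^ j = 1 / (j + 1) := by
      rw [intervalIntegral.integral_comp_sub_left fun t : ℝ => t ^ j]
      simp
    simp [betaMean, bernsteinBasis, hpow, Nat.cast_add_one_ne_zero]
  | i + 1, j => by
    have h := betaMean_succ_left_sub_succ_right (i := i) (j := j) (g := fun _ => 1)
      (fun t _ => hasDerivWithinAt_const t _ 1) continuousOn_const
    have hzero : betaMean (i + 1) (j + 1) (fun _ => 0) = 0 := by simp [betaMean]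
    rw [hzero, zero_div, sub_eq_zero] at h
    rw [h, betaMean_one i (j + 1)]

theorem succ_mul_betaMean_succ_left (i j : ℕ) (g : ℝ → ℝ) :
    ((i : ℝ) + 1) * betaMean (i + 1) j g = (i + j + 2) * betaMean i j (fun t => t * g t) := by
  have h : ∀ t, bernsteinBasis i j t * (t * g t) * (i + j + 1) =
      bernsteinBasis (i + 1) j t * g t * (i + 1) := fun t => by
    linear_combination -g t * succ_mul_bernsteinBasis_succ_left i j t
  have := congrArg (fun F : ℝ → ℝ => ∫ t in (0 : ℝ)..1, F t) (funext h)
  simp only [intervalIntegral.integral_mul_const] at this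
  simp only [betaMean]
  push_cast
  linear_combination -(i + j + 2 : ℝ) * this

theorem succ_mul_betaMean_succ_right (i j : ℕ) (g : ℝ → ℝ) :
    ((j : ℝ) + 1) * betaMean i (j + 1) g = (i + j + 2) * betaMean i j (fun t => (1 - t) * g t) := by
  have h : ∀ t, bernsteinBasis i j t * ((1 - t) * g t) * (i + j + 1) =
      bernsteinBasis i (j + 1) t * g t * (j + 1) := fun t => by
    linear_combination -g t * succ_mul_bernsteinBasis_succ_right i j t
  have := congrArg (fun F : ℝ → ℝ => ∫ t in (0 : ℝ)..1, F t) (funext h)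
  simp only [intervalIntegral.integral_mul_const] at this
  simp only [betaMean]
  push_cast
  linear_combination -(i + j + 2 : ℝ) * this

theorem betaMean_stein
    (hg : ∀ t ∈ Icc (0 : ℝ) 1, HasDerivWithinAt g (g' t) (Icc 0 1) t)
    (hg' : ContinuousOn g' (Icc 0 1)) :
    betaMean i j (fun t => (i + j + 2) * (t * g t) - t * (1 - t) * g' t) =
      (i + 1) * betaMean i j g := by
  have hgc : ContinuousOn g (Icc 0 1) := fun t ht => (hg t ht).continuousWithinAt
  have hdiff := betaMean_succ_left_sub_succ_right (i := i) (j := j) hg hg'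
  have hl := succ_mul_betaMean_succ_left i j g
  have hr := succ_mul_betaMean_succ_right i j g
  have hlr := succ_mul_betaMean_succ_left i (j + 1) g'
  have hrr := succ_mul_betaMean_succ_right i j (fun t => t * g' t)
  have hsum : betaMean i j (fun t => (1 - t) * g t) + betaMean i j (fun t => t * g t) =
      betaMean i j g := by
    rw [← betaMean_add (by fun_prop) (by fun_prop)]
    exact betaMean_congr fun t _ => by ring
  have hsplit : betaMean i j (fun t => (i + j + 2) * (t * g t) - t * (1 - t) * g' t) =
      (i + j + 2) * betaMean i j (fun t => t * g t) -
        betaMean i j (fun t => (1 - t) * (t * g' t)) := by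
    rw [sub_eq_add_neg, ← betaMean_const_mul, ← neg_one_mul, ← betaMean_const_mul,
      ← betaMean_add (by fun_prop) (by fun_prop)]
    exact betaMean_congr fun t _ => by ring
  have h3 : (i + j + 3 : ℝ) ≠ 0 := by positivity
  have h2 : (i + j + 2 : ℝ) ≠ 0 := by positivity
  rw [eq_div_iff h3] at hdiff
  push_cast at hlr
  rw [hsplit]
  refine mul_left_cancel₀ (mul_ne_zero h2 h3) ?_
  linear_combination -(j + 1 : ℝ) * (i + j + 3) * hl + (i + 1 : ℝ) * (i + j + 3) * hr +
    (i + 1 : ℝ) * (j + 1) * hdiff + (j + 1 : ℝ) * hlr + (i + j + 3 : ℝ) * hrr +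
    (i + j + 2 : ℝ) * (i + j + 3) * (i + 1) * hsum

end betaMean

/-- The Durrmeyer-type operator pairing the Bernstein basis of degree `m` with the Beta means of
degree `m + α + β` shifted by `α`. The operator `DM3 (m + 4)` is a combination of the five operators
with `α + β = 4`. -/
noncomputable def shiftedDurrmeyer (m α β : ℕ) (g : ℝ → ℝ) (x : ℝ) : ℝ :=
  ∑ p ∈ antidiagonal m, bernsteinBasis p.1 p.2 x * betaMean (p.1 + α) (p.2 + β) g

section shiftedDurrmeyer

variable {m α β : ℕ} {f g g' : ℝ → ℝ} {x : ℝ}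

theorem shiftedDurrmeyer_add (hf : ContinuousOn f (Icc 0 1)) (hg : ContinuousOn g (Icc 0 1)) :
    shiftedDurrmeyer m α β (fun t => f t + g t) x =
      shiftedDurrmeyer m α β f x + shiftedDurrmeyer m α β g x := by
  simp only [shiftedDurrmeyer, betaMean_add hf hg, mul_add, Finset.sum_add_distrib]

theorem shiftedDurrmeyer_const_mul (c : ℝ) (g : ℝ → ℝ) :
    shiftedDurrmeyer m α β (fun t => c * g t) x = c * shiftedDurrmeyer m α β g x := by
  simp only [shiftedDurrmeyer, betaMean_const_mul, Finset.mul_sum, mul_left_comm c]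

theorem shiftedDurrmeyer_one : shiftedDurrmeyer m α β (fun _ => 1) x = 1 := by
  simp only [shiftedDurrmeyer, betaMean_one, mul_one, sum_bernsteinBasis]

theorem abs_shiftedDurrmeyer_le (hf : ContinuousOn f (Icc 0 1)) (hg : ContinuousOn g (Icc 0 1))
    (h : ∀ t ∈ Icc (0 : ℝ) 1, |f t| ≤ g t) (hx : x ∈ Icc 0 1) :
    |shiftedDurrmeyer m α β f x| ≤ shiftedDurrmeyer m α β g x := by
  refine (Finset.abs_sum_le_sum_abs _ _).trans (Finset.sum_le_sum fun p _ => ?_)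
  rw [abs_mul, abs_of_nonneg (bernsteinBasis_nonneg _ _ hx)]
  exact mul_le_mul_of_nonneg_left (abs_betaMean_le hf hg h) (bernsteinBasis_nonneg _ _ hx)

theorem shiftedDurrmeyer_succ_left_sub_succ_right
    (hg : ∀ t ∈ Icc (0 : ℝ) 1, HasDerivWithinAt g (g' t) (Icc 0 1) t)
    (hg' : ContinuousOn g' (Icc 0 1)) :
    shiftedDurrmeyer m (α + 1) β g x - shiftedDurrmeyer m α (β + 1) g x =
      shiftedDurrmeyer m (α + 1) (β + 1) g' x / (m + α + β + 3) := by
  simp only [shiftedDurrmeyer, ← Finset.sum_sub_distrib, Finset.sum_div, ← mul_sub, ← add_assoc,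
    betaMean_succ_left_sub_succ_right hg hg']
  refine Finset.sum_congr rfl fun p hp => ?_
  have hm : (p.1 : ℝ) + p.2 = m := by exact_mod_cast mem_antidiagonal.1 hp
  rw [← hm, mul_div_assoc]
  push_cast
  ring_nf

theorem sum_bernsteinBasis_mul_sub_mul_betaMean
    (hg : ∀ t ∈ Icc (0 : ℝ) 1, HasDerivWithinAt g (g' t) (Icc 0 1) t)
    (hg' : ContinuousOn g' (Icc 0 1)) :
    ∑ p ∈ antidiagonal m,
        bernsteinBasis p.1 p.2 x * ((p.1 - m * x) * betaMean (p.1 + α) (p.2 + β) g) =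
      m * (x * (1 - x)) *
        (shiftedDurrmeyer (m - 1) (α + 1) (β + 1) g' x / (m + α + β + 2)) := by
  rcases m with _ | m
  · simp
  have hparts := sum_bernsteinBasis_mul_sub m (fun i j => betaMean (i + α) (j + β) g) x
  push_cast
  rw [hparts]
  have hdiff := shiftedDurrmeyer_succ_left_sub_succ_right (m := m) (α := α) (β := β) (x := x) hg hg'
  rw [show (m : ℝ) + 1 + α + β + 2 = m + α + β + 3 by ring, ← hdiff]
  simp only [shiftedDurrmeyer, ← Finset.sum_sub_distrib, ← mul_sub, add_right_comm _ 1, ← add_assoc]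

/-- This trades a factor `t - x` for a derivative and a factor `1 / m`. -/
theorem shiftedDurrmeyer_stein
    (hg : ∀ t ∈ Icc (0 : ℝ) 1, HasDerivWithinAt g (g' t) (Icc 0 1) t)
    (hg' : ContinuousOn g' (Icc 0 1)) :
    shiftedDurrmeyer m α β (fun t => (m + α + β + 2) * (t * g t) - t * (1 - t) * g' t) x =
      (α + 1 + m * x) * shiftedDurrmeyer m α β g x + m * (x * (1 - x)) *
        (shiftedDurrmeyer (m - 1) (α + 1) (β + 1) g' x / (m + α + β + 2)) := by
  rw [← sum_bernsteinBasis_mul_sub_mul_betaMean hg hg', shiftedDurrmeyer, shiftedDurrmeyer,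
    Finset.mul_sum, ← Finset.sum_add_distrib]
  refine Finset.sum_congr rfl fun p hp => ?_
  have hm : (p.1 : ℝ) + p.2 = m := by exact_mod_cast mem_antidiagonal.1 hp
  have hstein := betaMean_stein (i := p.1 + α) (j := p.2 + β) hg hg'
  push_cast at hstein
  rw [show (p.1 + α + (p.2 + β) + 2 : ℝ) = m + α + β + 2 by rw [← hm]; ring] at hstein
  rw [hstein]
  ring

end shiftedDurrmeyer

/-- The central moment of order `s` of `shiftedDurrmeyer m α β`. -/
noncomputable def centralMoment (m α β s : ℕ) (x : ℝ) : ℝ :=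
  shiftedDurrmeyer m α β (fun t => (t - x) ^ s) x

/-- The coefficient of the moment of order `s` in the recurrence `centralMoment_succ`. -/
noncomputable def momentDrift (α β s : ℕ) (x : ℝ) : ℝ :=
  (s + 1) * (1 - 2 * x) + α - (α + β) * x

theorem hasDerivAt_sub_pow (s : ℕ) (x t : ℝ) :
    HasDerivAt (fun t => (t - x) ^ s) (s * (t - x) ^ (s - 1)) t := by
  simpa using ((hasDerivAt_id t).sub_const x).fun_pow s

theorem centralMoment_zero (m α β : ℕ) (x : ℝ) : centralMoment m α β 0 x = 1 := by
  simp only [centralMoment, pow_zero, shiftedDurrmeyer_one]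

theorem centralMoment_succ (m α β s : ℕ) (x : ℝ) :
    (m + α + β + 2 + s : ℝ) * centralMoment m α β (s + 1) x =
      momentDrift α β s x * centralMoment m α β s x +
        s * (x * (1 - x)) * (centralMoment m α β (s - 1) x +
          m * centralMoment (m - 1) (α + 1) (β + 1) (s - 1) x / (m + α + β + 2)) := by
  have hstein := shiftedDurrmeyer_stein (m := m) (α := α) (β := β) (x := x)
    (fun t _ => (hasDerivAt_sub_pow s x t).hasDerivWithinAt) (by fun_prop)
  have hexpand : ∀ t : ℝ, (m + α + β + 2) * (t * (t - x) ^ s) -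
      t * (1 - t) * (s * (t - x) ^ (s - 1)) =
      (m + α + β + 2 + s) * (t - x) ^ (s + 1) +
        (((m + α + β + 2) * x - s * (1 - 2 * x)) * (t - x) ^ s +
          -(s * (x * (1 - x))) * (t - x) ^ (s - 1)) := fun t => by
    rcases s with _ | s
    · push_cast; ring
    · simp only [Nat.add_sub_cancel, pow_succ]; ring
  simp only [hexpand] at hstein
  rw [shiftedDurrmeyer_add (by fun_prop) (by fun_prop),
    shiftedDurrmeyer_add (by fun_prop) (by fun_prop)] at hstein
  simp only [shiftedDurrmeyer_const_mul] at hstein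
  simp only [centralMoment, momentDrift]
  linear_combination hstein

theorem momentDrift_succ_succ (α β s : ℕ) (x : ℝ) :
    momentDrift (α + 1) (β + 1) s x = momentDrift α β (s + 1) x := by
  simp only [momentDrift, Nat.cast_succ]
  ring

theorem abs_momentDrift_le (α β s : ℕ) {x : ℝ} (hx : x ∈ Icc 0 1) :
    |momentDrift α β s x| ≤ s + 1 + α + β := by
  have hs : (0 : ℝ) ≤ s := s.cast_nonneg
  have hα : (0 : ℝ) ≤ α := α.cast_nonneg
  have hβ : (0 : ℝ) ≤ β := β.cast_nonneg
  rw [momentDrift, abs_le]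
  constructor <;> nlinarith [mul_nonneg hs hx.1, mul_nonneg hs (sub_nonneg.2 hx.2),
    mul_nonneg hα hx.1, mul_nonneg hα (sub_nonneg.2 hx.2), mul_nonneg hβ hx.1,
    mul_nonneg hβ (sub_nonneg.2 hx.2), hx.1, hx.2]

section closedForms

variable (m α β : ℕ) (x : ℝ)

theorem centralMoment_one :
    centralMoment m α β 1 x = momentDrift α β 0 x / (m + α + β + 2) := by
  have h := centralMoment_succ m α β 0 x
  rw [centralMoment_zero] at h
  push_cast at h
  rw [eq_div_iff (by positivity)]
  linear_combination h

theorem centralMoment_two :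
    centralMoment m α β 2 x =
      (x * (1 - x) * (2 * m + α + β + 2) + momentDrift α β 1 x * momentDrift α β 0 x) /
        ((m + α + β + 2) * (m + α + β + 3)) := by
  have h := centralMoment_succ m α β 1 x
  rw [Nat.sub_self, centralMoment_zero, centralMoment_zero, centralMoment_one] at h
  push_cast at h
  field_simp at h ⊢
  linear_combination h

theorem mul_centralMoment_pred_one :
    m * centralMoment (m - 1) (α + 1) (β + 1) 1 x =
      m * momentDrift α β 1 x / (m + α + β + 3) := by
  rcases m with _ | m
  · simp
  rw [centralMoment_one, momentDrift_succ_succ]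
  push_cast
  ring_nf

theorem mul_centralMoment_pred_two :
    m * centralMoment (m - 1) (α + 1) (β + 1) 2 x =
      m * (x * (1 - x) * (2 * m + α + β + 2) + momentDrift α β 2 x * momentDrift α β 1 x) /
        ((m + α + β + 3) * (m + α + β + 4)) := by
  rcases m with _ | m
  · simp
  rw [centralMoment_two, momentDrift_succ_succ, momentDrift_succ_succ]
  push_cast
  ring_nf

theorem centralMoment_three :
    centralMoment m α β 3 x =
      (2 * (x * (1 - x)) * (m * momentDrift α β 1 x + (m + α + β + 3) * momentDrift α β 0 x) +
        momentDrift α β 2 x * (x * (1 - x) * (2 * m + α + β + 2) +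
          momentDrift α β 1 x * momentDrift α β 0 x)) /
        ((m + α + β + 2) * (m + α + β + 3) * (m + α + β + 4)) := by
  have h := centralMoment_succ m α β 2 x
  rw [mul_centralMoment_pred_one, centralMoment_one, centralMoment_two] at h
  push_cast at h
  field_simp at h ⊢
  linear_combination h

theorem centralMoment_four :
    centralMoment m α β 4 x =
      (3 * (x * (1 - x)) *
        (m * (x * (1 - x) * (2 * m + α + β + 2) + momentDrift α β 2 x * momentDrift α β 1 x) +
          (m + α + β + 4) * (x * (1 - x) * (2 * m + α + β + 2) +
            momentDrift α β 1 x * momentDrift α β 0 x)) +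
        momentDrift α β 3 x * (2 * (x * (1 - x)) *
          (m * momentDrift α β 1 x + (m + α + β + 3) * momentDrift α β 0 x) +
        momentDrift α β 2 x * (x * (1 - x) * (2 * m + α + β + 2) +
          momentDrift α β 1 x * momentDrift α β 0 x))) /
        ((m + α + β + 2) * (m + α + β + 3) * (m + α + β + 4) * (m + α + β + 5)) := by
  have h := centralMoment_succ m α β 3 x
  rw [mul_centralMoment_pred_two, centralMoment_two, centralMoment_three] at h
  push_cast at h
  field_simp at h ⊢
  linear_combination h

end closedForms

theorem abs_mul_centralMoment_pred_le {m α β s p : ℕ} {x C : ℝ} (hC : 0 ≤ C)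
    (h : ∀ m : ℕ, |centralMoment m (α + 1) (β + 1) s x| ≤
      C / (m + (α + 1 : ℕ) + (β + 1 : ℕ) + 1) ^ p) :
    |m * centralMoment (m - 1) (α + 1) (β + 1) s x / (m + α + β + 2)| ≤
      C / (m + α + β + 1) ^ p := by
  rcases m with _ | m
  · simp only [Nat.cast_zero, zero_mul, zero_div, abs_zero]
    positivity
  have hle : ((m + 1 : ℕ) : ℝ) / ((m + 1 : ℕ) + α + β + 2) ≤ 1 :=
    div_le_one_of_le₀ (by linarith [(by positivity : (0 : ℝ) ≤ α + β)]) (by positivity)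
  calc |(m + 1 : ℕ) * centralMoment m (α + 1) (β + 1) s x / ((m + 1 : ℕ) + α + β + 2)|
      = ((m + 1 : ℕ) : ℝ) / ((m + 1 : ℕ) + α + β + 2) *
          |centralMoment m (α + 1) (β + 1) s x| := by
        rw [mul_div_right_comm, abs_mul, abs_of_nonneg (by positivity)]
    _ ≤ 1 * (C / (m + (α + 1 : ℕ) + (β + 1 : ℕ) + 1) ^ p) := by
        gcongr
        exact h m
    _ ≤ C / ((m + 1 : ℕ) + α + β + 1) ^ p := by
        rw [one_mul]
        gcongr C / ?_ ^ p
        push_cast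
        linarith

theorem mul_abs_centralMoment_add_two_le (m α β s : ℕ) {x : ℝ} (hx : x ∈ Icc 0 1) :
    (m + α + β + 1) * |centralMoment m α β (s + 2) x| ≤
      (s + 2 + α + β) * |centralMoment m α β (s + 1) x| + (s + 1) * (|centralMoment m α β s x| +
        |m * centralMoment (m - 1) (α + 1) (β + 1) s x / (m + α + β + 2)|) := by
  have hrec := centralMoment_succ m α β (s + 1) x
  rw [Nat.add_sub_cancel] at hrec
  have hX : |x * (1 - x)| ≤ 1 := by
    rw [abs_of_nonneg (mul_nonneg hx.1 (sub_nonneg.2 hx.2))]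
    nlinarith [hx.1, hx.2]
  have hu : |momentDrift α β (s + 1) x| ≤ s + 2 + α + β := by
    refine (abs_momentDrift_le α β (s + 1) hx).trans_eq ?_
    push_cast
    ring
  calc (m + α + β + 1) * |centralMoment m α β (s + 2) x|
      ≤ |(m + α + β + 2 + (s + 1 : ℕ)) * centralMoment m α β (s + 2) x| := by
        rw [abs_mul]
        gcongr
        refine le_trans ?_ (le_abs_self _)
        linarith [(by positivity : (0 : ℝ) ≤ (s + 1 : ℕ))]
    _ ≤ |momentDrift α β (s + 1) x| * |centralMoment m α β (s + 1) x| +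
        (s + 1) * |x * (1 - x)| * (|centralMoment m α β s x| +
          |m * centralMoment (m - 1) (α + 1) (β + 1) s x / (m + α + β + 2)|) := by
        rw [hrec]
        refine (abs_add_le _ _).trans ?_
        rw [abs_mul, abs_mul, abs_mul, Nat.abs_cast, Nat.cast_succ]
        gcongr
        exact abs_add_le _ _
    _ ≤ _ := by
        rw [mul_assoc (s + 1 : ℝ)]
        gcongr
        exact mul_le_of_le_one_left (by positivity) hX

/-- The recurrence gains a factor `1 / m` whenever the order grows by two. -/
theorem exists_abs_centralMoment_le (s α β : ℕ) : ∃ C : ℝ, 0 ≤ C ∧ ∀ m : ℕ, ∀ x ∈ Icc (0 : ℝ) 1,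
    |centralMoment m α β s x| ≤ C / (m + α + β + 1) ^ ((s + 1) / 2) := by
  induction s using Nat.twoStepInduction generalizing α β with
  | zero => exact ⟨1, zero_le_one, fun m x _ => by simp [centralMoment_zero]⟩
  | one =>
    refine ⟨1 + α + β, by positivity, fun m x hx => ?_⟩
    have hu := abs_momentDrift_le α β 0 hx
    rw [Nat.cast_zero, zero_add] at hu
    rw [centralMoment_one, abs_div, abs_of_nonneg (by positivity : (0 : ℝ) ≤ m + α + β + 2),
      pow_one]
    gcongr
    norm_num
  | more s ih₀ ih₁ =>
    obtain ⟨C₀, hC₀, h₀⟩ := ih₀ α β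
    obtain ⟨C₁, hC₁, h₁⟩ := ih₁ α β
    obtain ⟨C₂, hC₂, h₂⟩ := ih₀ (α + 1) (β + 1)
    refine ⟨(s + 2 + α + β) * C₁ + (s + 1) * (C₀ + C₂), by positivity, fun m x hx => ?_⟩
    have hN : (1 : ℝ) ≤ m + α + β + 1 := by linarith [(by positivity : (0 : ℝ) ≤ m + α + β)]
    have h₁' : |centralMoment m α β (s + 1) x| ≤ C₁ / (m + α + β + 1) ^ ((s + 1) / 2) :=
      (h₁ m x hx).trans (by gcongr; omega)
    rw [show (s + 2 + 1) / 2 = (s + 1) / 2 + 1 by omega, pow_succ, ← div_div,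
      le_div_iff₀' (by positivity)]
    calc (m + α + β + 1) * |centralMoment m α β (s + 2) x|
        ≤ (s + 2 + α + β) * (C₁ / (m + α + β + 1) ^ ((s + 1) / 2)) +
            (s + 1) * (C₀ / (m + α + β + 1) ^ ((s + 1) / 2) +
              C₂ / (m + α + β + 1) ^ ((s + 1) / 2)) := by
          refine (mul_abs_centralMoment_add_two_le m α β s hx).trans ?_
          gcongr
          · exact h₀ m x hx
          · exact abs_mul_centralMoment_pred_le hC₂ fun m => h₂ m x hx
      _ = ((s + 2 + α + β) * C₁ + (s + 1) * (C₀ + C₂)) /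
            (m + α + β + 1) ^ ((s + 1) / 2) := by ring

theorem bern_natCast (i j : ℕ) (x : ℝ) : bern (i + j) (i : ℤ) x = bernsteinBasis i j x := by
  rw [bern, if_pos ⟨by positivity, by exact_mod_cast Nat.le_add_right i j⟩, Int.toNat_natCast,
    Nat.add_sub_cancel_left, bernsteinBasis]

theorem sum_bern_sub_mul (m i j : ℕ) (h : ℕ → ℕ → ℝ) (x : ℝ) :
    ∑ p ∈ antidiagonal (m + i + j), bern m ((p.1 : ℤ) - i) x * h p.1 p.2 =
      ∑ p ∈ antidiagonal m, bernsteinBasis p.1 p.2 x * h (p.1 + i) (p.2 + j) := by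
  symm
  refine Finset.sum_of_injOn (fun p => (p.1 + i, p.2 + j)) ?_ ?_ ?_ ?_
  · exact Function.Injective.injOn fun p q hpq => by simpa [Prod.ext_iff] using hpq
  · intro p hp
    have := mem_antidiagonal.1 hp
    exact mem_antidiagonal.2 (by simp only; omega)
  · intro p hp hnot
    rw [bern, if_neg, zero_mul]
    rintro ⟨hle, hge⟩
    have := mem_antidiagonal.1 hp
    refine hnot ⟨(p.1 - i, p.2 - j), mem_antidiagonal.2 (by simp only; omega), ?_⟩
    ext <;> simp only <;> omega
  · intro p hp
    rw [← mem_antidiagonal.1 hp, Nat.cast_add, add_sub_cancel_right, bern_natCast]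

/-- The weight of the basis function shifted by `i` in `pM3`. -/
noncomputable def shiftCoeff (n : ℕ) (x : ℝ) : ℕ → ℝ
  | 0 => bT n x
  | 1 => dT n x
  | 2 => eT n x
  | 3 => dT n (1 - x)
  | 4 => bT n (1 - x)
  | _ => 0

theorem pM3_eq_sum (n : ℕ) (k : ℤ) (x : ℝ) :
    pM3 n k x = ∑ i ∈ range 5, shiftCoeff n x i * bern (n - 4) (k - i) x := by
  simp [pM3, Finset.sum_range_succ, shiftCoeff]

theorem DM3_eq_sum_betaMean (n : ℕ) (f : ℝ → ℝ) (x : ℝ) :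
    DM3 n f x = ∑ p ∈ antidiagonal n, pM3 n p.1 x * betaMean p.1 p.2 f := by
  rw [DM3, Finset.Nat.sum_antidiagonal_eq_sum_range_succ_mk, Finset.mul_sum]
  refine Finset.sum_congr rfl fun k hk => ?_
  obtain ⟨l, rfl⟩ := Nat.exists_eq_add_of_le (Finset.mem_range_succ_iff.1 hk)
  simp only [Nat.add_sub_cancel_left, bern_natCast, betaMean, Nat.cast_add]
  ring

theorem DM3_eq_sum_shiftedDurrmeyer (m : ℕ) (f : ℝ → ℝ) (x : ℝ) :
    DM3 (m + 4) f x = ∑ i ∈ range 5, shiftCoeff (m + 4) x i * shiftedDurrmeyer m i (4 - i) f x := by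
  simp only [DM3_eq_sum_betaMean, pM3_eq_sum, Finset.sum_mul]
  rw [Finset.sum_comm]
  refine Finset.sum_congr rfl fun i hi => ?_
  have hi : m + 4 = m + i + (4 - i) := by have := Finset.mem_range.1 hi; omega
  rw [shiftedDurrmeyer, ← sum_bern_sub_mul m i (4 - i) (fun k l => betaMean k l f), ← hi,
    Finset.mul_sum]
  simp only [Nat.add_sub_cancel, mul_assoc]

/-- `F 1, …, F d` are the successive derivatives of `F 0` on `[0, 1]`, all of them continuous.
Carrying the derivatives as data allows closed forms for powers and for Taylor remainders. -/
structure IsDerivChain (F : ℕ → ℝ → ℝ) (d : ℕ) : Prop where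
  continuousOn : ∀ j ≤ d, ContinuousOn (F j) (Icc 0 1)
  hasDerivWithinAt : ∀ j < d, ∀ t ∈ Icc (0 : ℝ) 1,
    HasDerivWithinAt (F j) (F (j + 1) t) (Icc 0 1) t

theorem IsDerivChain.mono {F : ℕ → ℝ → ℝ} {d e : ℕ} (hF : IsDerivChain F e) (h : d ≤ e) :
    IsDerivChain F d :=
  ⟨fun j hj => hF.continuousOn j (hj.trans h), fun j hj => hF.hasDerivWithinAt j (hj.trans_le h)⟩

theorem IsDerivChain.tail {F : ℕ → ℝ → ℝ} {d : ℕ} (hF : IsDerivChain F (d + 1)) :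
    IsDerivChain (fun j => F (j + 1)) d :=
  ⟨fun j hj => hF.continuousOn (j + 1) (by omega),
    fun j hj => hF.hasDerivWithinAt (j + 1) (by omega)⟩

theorem shiftedDurrmeyer_add_left_eq_sum {F : ℕ → ℝ → ℝ} (m i a b : ℕ) (x : ℝ)
    (hF : IsDerivChain F i) :
    shiftedDurrmeyer m (a + i) b (F 0) x = ∑ j ∈ range (i + 1), (i.choose j : ℝ) *
      (shiftedDurrmeyer m (a + j) (b + i) (F j) x / ((m + a + b + i + 2).ascFactorial j : ℕ)) := by
  induction i generalizing F a b with
  | zero => simp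
  | succ i ih =>
    have hdiff := shiftedDurrmeyer_succ_left_sub_succ_right (m := m) (α := a + i) (β := b) (x := x)
      (hF.hasDerivWithinAt 0 i.succ_pos) (hF.continuousOn 1 (by omega))
    rw [Finset.sum_choose_succ_mul (fun j _ => shiftedDurrmeyer m (a + j) (b + (i + 1)) (F j) x /
      ((m + a + b + (i + 1) + 2).ascFactorial j : ℕ)), ← add_assoc a i 1,
      sub_eq_iff_eq_add'.1 hdiff, ih a (b + 1) (hF.mono (by omega)), add_right_comm a i 1,
      ih (a + 1) (b + 1) hF.tail, Finset.sum_div]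
    congr 1
    · simp only [add_assoc, add_comm, add_left_comm]
    · refine Finset.sum_congr rfl fun j _ => ?_
      have hasc : (m + a + b + (i + 1) + 2).ascFactorial (j + 1) =
          (m + (a + i) + b + 3) * (m + (a + 1) + (b + 1) + i + 2).ascFactorial j := by
        rw [Nat.ascFactorial_succ, ← Nat.succ_ascFactorial, Nat.succ_eq_add_one]
        ring_nf
      rw [hasc, show a + 1 + j = a + (j + 1) by ring, show b + 1 + i = b + (i + 1) by ring,
        mul_div_assoc, div_div, mul_comm (_ + _ + _ + _)]
      push_cast
      rfl

/-- The coefficients of `DM3 n` in its expansion along successive derivatives: binomial sums of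
`shiftCoeff n x`. The powers of `n` cancel so that `newtonCoeff n x j` has degree `j / 2` in `n`. -/
noncomputable def newtonCoeff (n : ℕ) (x : ℝ) : ℕ → ℝ
  | 0 => 1
  | 1 => 6 * x - 1
  | 2 => 17 * x ^ 2 - 8 * x + 1 - n * (x * (1 - x))
  | 3 => 32 * x ^ 3 - 31 * x ^ 2 + 10 * x - 1 + 2 * n * (x * (1 - x)) * (1 - 3 * x)
  | 4 => 16 * x ^ 3 - 55 / 3 * x ^ 2 + 19 / 3 * x - 2 / 3 + n * (x * (1 - x)) * (7 / 6 - 3 * x) +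
      n ^ 2 * (x * (1 - x)) ^ 2 / 2
  | _ => 0

theorem sum_choose_mul_shiftCoeff (n : ℕ) (x : ℝ) {j : ℕ} (hj : j ∈ range 5) :
    ∑ i ∈ range 5, (i.choose j : ℝ) * shiftCoeff n x i = newtonCoeff n x j := by
  rw [Finset.mem_range] at hj
  interval_cases j <;>
    norm_num [Finset.sum_range_succ, shiftCoeff, newtonCoeff, bT, dT, eT, Nat.choose] <;> ring

theorem DM3_eq_sum_newtonCoeff {F : ℕ → ℝ → ℝ} (m : ℕ) (x : ℝ) (hF : IsDerivChain F 4) :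
    DM3 (m + 4) (F 0) x = ∑ j ∈ range 5, newtonCoeff (m + 4) x j *
      (shiftedDurrmeyer m j 4 (F j) x / ((m + 6).ascFactorial j : ℕ)) := by
  have hexpand : ∀ i ∈ range 5, shiftCoeff (m + 4) x i * shiftedDurrmeyer m i (4 - i) (F 0) x =
      ∑ j ∈ range 5, (i.choose j : ℝ) * shiftCoeff (m + 4) x i *
        (shiftedDurrmeyer m j 4 (F j) x / ((m + 6).ascFactorial j : ℕ)) := fun i hi => by
    have hi := Finset.mem_range_succ_iff.1 hi
    have h := shiftedDurrmeyer_add_left_eq_sum m i 0 (4 - i) x (hF.mono hi)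
    rw [show m + 0 + (4 - i) + i + 2 = m + 6 by omega, Nat.sub_add_cancel hi] at h
    simp only [zero_add] at h
    rw [h, Finset.mul_sum, ← Finset.sum_subset (Finset.range_subset_range.2 (Nat.succ_le_succ hi))]
    · exact Finset.sum_congr rfl fun j _ => by ring
    · intro j _ hj
      rw [Nat.choose_eq_zero_of_lt (by simpa using hj), Nat.cast_zero, zero_mul, zero_mul]
  rw [DM3_eq_sum_shiftedDurrmeyer, Finset.sum_congr rfl hexpand, Finset.sum_comm]
  refine Finset.sum_congr rfl fun j hj => ?_
  rw [← Finset.sum_mul, sum_choose_mul_shiftCoeff _ _ hj]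

theorem abs_newtonCoeff_le {n j : ℕ} (hn : 1 ≤ n) (hj : j ∈ range 5) {x : ℝ} (hx : x ∈ Icc 0 1) :
    |newtonCoeff n x j| ≤ 100 * n ^ (j / 2) := by
  obtain ⟨hx₀, hx₁⟩ := hx
  have hn : (1 : ℝ) ≤ n := by exact_mod_cast hn
  have hnn : (n : ℝ) ≤ n ^ 2 := le_self_pow₀ hn two_ne_zero
  have hX₀ : 0 ≤ x * (1 - x) := mul_nonneg hx₀ (sub_nonneg.2 hx₁)
  have hX₁ : x * (1 - x) ≤ 1 := by nlinarith
  have hY₀ : 0 ≤ n * (x * (1 - x)) := by positivity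
  have hY₁ : n * (x * (1 - x)) ≤ n := mul_le_of_le_one_right (by positivity) hX₁
  have hYx₀ : 0 ≤ n * (x * (1 - x)) * x := mul_nonneg hY₀ hx₀
  have hYx₁ : n * (x * (1 - x)) * x ≤ n * (x * (1 - x)) := mul_le_of_le_one_right hY₀ hx₁
  have hZ₀ : 0 ≤ n ^ 2 * (x * (1 - x)) ^ 2 := by positivity
  have hZ₁ : n ^ 2 * (x * (1 - x)) ^ 2 ≤ (n : ℝ) ^ 2 :=
    mul_le_of_le_one_right (by positivity) (pow_le_one₀ hX₀ hX₁)
  have hx2₀ : 0 ≤ x ^ 2 := by positivity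
  have hx2₁ : x ^ 2 ≤ 1 := pow_le_one₀ hx₀ hx₁
  have hx3₀ : 0 ≤ x ^ 3 := by positivity
  have hx3₁ : x ^ 3 ≤ 1 := pow_le_one₀ hx₀ hx₁
  rw [abs_le]
  rw [Finset.mem_range] at hj
  interval_cases j <;> norm_num [newtonCoeff] <;> constructor <;> linarith

theorem abs_DM3_le_of_isDerivChain {F : ℕ → ℝ → ℝ} {m q : ℕ} {x K : ℝ} (hq : 2 ≤ q)
    (hF : IsDerivChain F 4) (hx : x ∈ Icc 0 1)
    (hK : ∀ j ∈ range 5, |shiftedDurrmeyer m j 4 (F j) x| ≤ K / (m + 4) ^ (q - (j + 1) / 2)) :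
    |DM3 (m + 4) (F 0) x| ≤ 500 * K / (m + 4) ^ q := by
  have hterm : ∀ j ∈ range 5, |newtonCoeff (m + 4) x j *
      (shiftedDurrmeyer m j 4 (F j) x / ((m + 6).ascFactorial j : ℕ))| ≤
        100 * K / (m + 4) ^ q := fun j hj => by
    have hasc : ((m : ℝ) + 4) ^ j ≤ ((m + 6).ascFactorial j : ℕ) := by
      exact_mod_cast (Nat.pow_le_pow_left (by omega) j).trans
        (Nat.pow_succ_le_ascFactorial (m + 6) j)
    have hA := abs_newtonCoeff_le (n := m + 4) (by omega) hj hx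
    have hj' : j ≤ 4 := Finset.mem_range_succ_iff.1 hj
    push_cast at hA
    rw [abs_mul, abs_div, Nat.abs_cast]
    calc |newtonCoeff (m + 4) x j| *
          (|shiftedDurrmeyer m j 4 (F j) x| / ((m + 6).ascFactorial j : ℕ))
        ≤ 100 * (m + 4) ^ (j / 2) * (K / (m + 4) ^ (q - (j + 1) / 2) / (m + 4) ^ j) := by
          have := (abs_nonneg _).trans (hK j hj)
          gcongr
          exact hK j hj
      _ = 100 * K / (m + 4) ^ q := by
          rw [div_div, ← pow_add, show q - (j + 1) / 2 + j = q + j / 2 by omega, pow_add]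
          field_simp
  rw [DM3_eq_sum_newtonCoeff m x hF]
  refine (Finset.abs_sum_le_sum_abs _ _).trans ((Finset.sum_le_sum hterm).trans_eq ?_)
  rw [Finset.sum_const, Finset.card_range]
  ring

theorem isDerivChain_sub_pow (r d : ℕ) (x : ℝ) :
    IsDerivChain (fun j t => (r.descFactorial j : ℝ) * (t - x) ^ (r - j)) d where
  continuousOn j _ := by fun_prop
  hasDerivWithinAt j _ t _ := by
    have h := ((hasDerivAt_sub_pow (r - j) x t).const_mul
      (r.descFactorial j : ℝ)).hasDerivWithinAt (s := Icc 0 1)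
    rw [Nat.descFactorial_succ, ← Nat.sub_sub]
    refine h.congr_deriv ?_
    push_cast
    ring

theorem DM3_sub_pow (m r : ℕ) (x : ℝ) :
    DM3 (m + 4) (fun t => (t - x) ^ r) x = ∑ j ∈ range 5, newtonCoeff (m + 4) x j *
      (r.descFactorial j * centralMoment m j 4 (r - j) x / ((m + 6).ascFactorial j : ℕ)) := by
  have h := DM3_eq_sum_newtonCoeff m x (isDerivChain_sub_pow r 4 x)
  simpa only [Nat.descFactorial_zero, Nat.cast_one, one_mul, Nat.sub_zero,
    shiftedDurrmeyer_const_mul, centralMoment] using h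

theorem DM3_one (m : ℕ) (x : ℝ) : DM3 (m + 4) (fun _ => 1) x = 1 := by
  simpa [Finset.sum_range_succ, newtonCoeff, centralMoment_zero] using DM3_sub_pow m 0 x

theorem DM3_sub (m : ℕ) (x : ℝ) : DM3 (m + 4) (fun t => t - x) x = 0 := by
  have h := DM3_sub_pow m 1 x
  simp only [pow_one] at h
  rw [h]
  simp only [Finset.sum_range_succ, Finset.sum_range_zero, newtonCoeff, centralMoment_zero,
    centralMoment_one, momentDrift, Nat.descFactorial, Nat.ascFactorial, Nat.reduceSub]
  push_cast
  field_simp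
  ring

theorem DM3_sub_sq (m : ℕ) (x : ℝ) : DM3 (m + 4) (fun t => (t - x) ^ 2) x = 0 := by
  rw [DM3_sub_pow]
  simp only [Finset.sum_range_succ, Finset.sum_range_zero, newtonCoeff, centralMoment_zero,
    centralMoment_one, centralMoment_two, momentDrift, Nat.descFactorial, Nat.ascFactorial,
    Nat.reduceSub]
  push_cast
  field_simp
  ring

theorem DM3_sub_cube (m : ℕ) (x : ℝ) : DM3 (m + 4) (fun t => (t - x) ^ 3) x = 0 := by
  rw [DM3_sub_pow]
  simp only [Finset.sum_range_succ, Finset.sum_range_zero, newtonCoeff, centralMoment_zero,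
    centralMoment_one, centralMoment_two, centralMoment_three, momentDrift, Nat.descFactorial,
    Nat.ascFactorial, Nat.reduceSub]
  push_cast
  field_simp
  ring

theorem DM3_sub_pow_four (m : ℕ) (x : ℝ) :
    DM3 (m + 4) (fun t => (t - x) ^ 4) x =
      (20 * (x * (1 - x)) * (5 - 21 * (x * (1 - x))) * (m + 4) - 40 + 440 * (x * (1 - x)) -
        1152 * (x * (1 - x)) ^ 2) / ((m + 6) * (m + 7) * (m + 8) * (m + 9)) := by
  rw [DM3_sub_pow]
  simp only [Finset.sum_range_succ, Finset.sum_range_zero, newtonCoeff, centralMoment_zero,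
    centralMoment_one, centralMoment_two, centralMoment_three, centralMoment_four, momentDrift,
    Nat.descFactorial, Nat.ascFactorial, Nat.reduceSub]
  push_cast
  field_simp
  ring

theorem abs_DM3_sub_pow_four_le (m : ℕ) {x : ℝ} (hx : x ∈ Icc 0 1) :
    |DM3 (m + 4) (fun t => (t - x) ^ 4) x| ≤ 100 / (m + 4) ^ 3 := by
  have hX₀ : 0 ≤ x * (1 - x) := mul_nonneg hx.1 (sub_nonneg.2 hx.2)
  have hX₁ : x * (1 - x) ≤ 1 / 4 := by nlinarith [sq_nonneg (x - 1 / 2)]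
  have hlead : -25 ≤ 20 * (x * (1 - x)) * (5 - 21 * (x * (1 - x))) := by nlinarith
  have hnum : |20 * (x * (1 - x)) * (5 - 21 * (x * (1 - x))) * (m + 4) - 40 +
      440 * (x * (1 - x)) - 1152 * (x * (1 - x)) ^ 2| ≤ 100 * ((m : ℝ) + 4) := by
    rw [abs_le]
    constructor <;> nlinarith
  rw [DM3_sub_pow_four, abs_div,
    abs_of_nonneg (by positivity : (0 : ℝ) ≤ (m + 6) * (m + 7) * (m + 8) * (m + 9))]
  calc |20 * (x * (1 - x)) * (5 - 21 * (x * (1 - x))) * (m + 4) - 40 + 440 * (x * (1 - x)) -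
        1152 * (x * (1 - x)) ^ 2| / ((m + 6) * (m + 7) * (m + 8) * (m + 9))
      ≤ 100 * ((m : ℝ) + 4) / ((m + 4) * (m + 4) * (m + 4) * (m + 4)) := by
        gcongr <;> norm_num
    _ = 100 / ((m : ℝ) + 4) ^ 3 := by field_simp

theorem exists_abs_DM3_sub_pow_le {r : ℕ} (hr : 3 ≤ r) : ∃ C : ℝ, ∀ m : ℕ, ∀ x ∈ Icc (0 : ℝ) 1,
    |DM3 (m + 4) (fun t => (t - x) ^ r) x| ≤ C / (m + 4) ^ ((r + 1) / 2) := by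
  choose C hC₀ hC using fun j => exists_abs_centralMoment_le (r - j) j 4
  refine ⟨500 * ∑ j ∈ range 5, r.descFactorial j * C j, fun m x hx => ?_⟩
  have h := abs_DM3_le_of_isDerivChain (q := (r + 1) / 2) (by omega) (isDerivChain_sub_pow r 4 x) hx
    (m := m) (K := ∑ j ∈ range 5, r.descFactorial j * C j) fun j hj => ?_
  · simpa only [Nat.descFactorial_zero, Nat.cast_one, one_mul, Nat.sub_zero] using h
  have hCj := hC₀ j
  rw [shiftedDurrmeyer_const_mul, abs_mul, Nat.abs_cast]
  calc r.descFactorial j * |shiftedDurrmeyer m j 4 (fun t => (t - x) ^ (r - j)) x|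
      ≤ r.descFactorial j * (C j / (m + j + (4 : ℕ) + 1) ^ ((r - j + 1) / 2)) := by
        gcongr
        exact hC j m x hx
    _ ≤ r.descFactorial j * (C j / (m + 4) ^ ((r + 1) / 2 - (j + 1) / 2)) := by
        gcongr ?_ * (_ / ?_)
        calc ((m : ℝ) + 4) ^ ((r + 1) / 2 - (j + 1) / 2)
            ≤ (m + 4) ^ ((r - j + 1) / 2) := by
              gcongr
              · linarith [m.cast_nonneg (α := ℝ)]
              · omega
          _ ≤ (m + j + (4 : ℕ) + 1) ^ ((r - j + 1) / 2) := by
              gcongr ?_ ^ _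
              push_cast
              linarith [j.cast_nonneg (α := ℝ)]
    _ ≤ (∑ j ∈ range 5, r.descFactorial j * C j) / (m + 4) ^ ((r + 1) / 2 - (j + 1) / 2) := by
        rw [← mul_div_assoc]
        gcongr
        exact Finset.single_le_sum (f := fun j => (r.descFactorial j : ℝ) * C j)
          (fun j _ => mul_nonneg (Nat.cast_nonneg _) (hC₀ j)) hj

section linearity

variable {n : ℕ} {f g : ℝ → ℝ} {x : ℝ}

theorem DM3_add (hf : ContinuousOn f (Icc 0 1)) (hg : ContinuousOn g (Icc 0 1)) :
    DM3 n (fun t => f t + g t) x = DM3 n f x + DM3 n g x := by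
  simp only [DM3_eq_sum_betaMean, betaMean_add hf hg, mul_add, Finset.sum_add_distrib]

theorem DM3_const_mul (c : ℝ) (g : ℝ → ℝ) :
    DM3 n (fun t => c * g t) x = c * DM3 n g x := by
  simp only [DM3_eq_sum_betaMean, betaMean_const_mul, Finset.mul_sum, mul_left_comm c]

theorem DM3_sum_const_mul {ι : Type*} (s : Finset ι) (c : ι → ℝ) {g : ι → ℝ → ℝ}
    (hg : ∀ i, ContinuousOn (g i) (Icc 0 1)) :
    DM3 n (fun t => ∑ i ∈ s, c i * g i t) x = ∑ i ∈ s, c i * DM3 n (g i) x := by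
  classical
  induction s using Finset.induction with
  | empty => simp [DM3]
  | insert i s hi ih =>
    simp only [Finset.sum_insert hi]
    rw [DM3_add (by fun_prop) (by fun_prop), DM3_const_mul, ih]

end linearity

theorem isDerivChain_iteratedDerivWithin {f : ℝ → ℝ} {d : ℕ} (hf : ContDiffOn ℝ d f (Icc 0 1)) :
    IsDerivChain (fun j => iteratedDerivWithin j f (Icc 0 1)) d where
  continuousOn j hj := hf.continuousOn_iteratedDerivWithin (by exact_mod_cast hj)
    (uniqueDiffOn_Icc one_pos)
  hasDerivWithinAt j hj t ht := by
    rw [iteratedDerivWithin_succ]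
    exact (hf.differentiableOn_iteratedDerivWithin (by exact_mod_cast hj)
      (uniqueDiffOn_Icc one_pos) t ht).hasDerivWithinAt

/-- The `j`-th derivative of the Taylor remainder of order `d` at `x` of a derivative chain `F`. -/
noncomputable def taylorRemainder (F : ℕ → ℝ → ℝ) (d : ℕ) (x : ℝ) (j : ℕ) (t : ℝ) : ℝ :=
  F j t - ∑ r ∈ range d, F r x / r.factorial * (r.descFactorial j * (t - x) ^ (r - j))

section taylorRemainder

variable {F : ℕ → ℝ → ℝ} {d j : ℕ} {x : ℝ}

theorem IsDerivChain.taylorRemainder (hF : IsDerivChain F d) (x : ℝ) :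
    IsDerivChain (taylorRemainder F d x) d where
  continuousOn j hj := (hF.continuousOn j hj).sub (by fun_prop)
  hasDerivWithinAt j hj t ht := (hF.hasDerivWithinAt j hj t ht).sub
    (HasDerivWithinAt.fun_sum fun r _ =>
      ((isDerivChain_sub_pow r d x).hasDerivWithinAt j hj t ht).const_mul _)

theorem taylorRemainder_self (F : ℕ → ℝ → ℝ) (x : ℝ) (hj : j < d) :
    taylorRemainder F d x j x = 0 := by
  rw [taylorRemainder, Finset.sum_eq_single_of_mem j (Finset.mem_range.2 hj)]
  · rw [Nat.descFactorial_self, Nat.sub_self, pow_zero, mul_one,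
      div_mul_cancel₀ _ (by positivity), sub_self]
  · intro r _ hr
    rcases hr.lt_or_gt with h | h
    · rw [Nat.descFactorial_of_lt h, Nat.cast_zero, zero_mul, mul_zero]
    · rw [sub_self, zero_pow (Nat.sub_ne_zero_of_lt h), mul_zero, mul_zero]

theorem taylorRemainder_top (F : ℕ → ℝ → ℝ) (d : ℕ) (x t : ℝ) :
    taylorRemainder F d x d t = F d t := by
  rw [taylorRemainder, Finset.sum_eq_zero, sub_zero]
  intro r hr
  rw [Nat.descFactorial_of_lt (Finset.mem_range.1 hr), Nat.cast_zero, zero_mul, mul_zero]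

theorem IsDerivChain.abs_le_mul_pow {B t : ℝ} (hF : IsDerivChain F d)
    (hB : ∀ t ∈ Icc (0 : ℝ) 1, |F d t| ≤ B) (hx : x ∈ Icc 0 1) (hzero : ∀ j < d, F j x = 0)
    (hj : j ≤ d) (ht : t ∈ Icc 0 1) : |F j t| ≤ B * |t - x| ^ (d - j) := by
  induction hj using Nat.decreasingInduction generalizing t with
  | self => simpa using hB t ht
  | of_succ j hj ih =>
    have hsub : Set.uIcc x t ⊆ Icc 0 1 := Set.uIcc_subset_Icc hx ht
    have hB₀ : 0 ≤ B := (abs_nonneg _).trans (hB t ht)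
    have hle := (convex_uIcc x t).norm_image_sub_le_of_norm_hasDerivWithin_le
      (f := F j) (f' := F (j + 1)) (C := B * |t - x| ^ (d - (j + 1)))
      (fun s hs => (hF.hasDerivWithinAt j hj s (hsub hs)).mono hsub)
      (fun s hs => (ih (hsub hs)).trans (by
        gcongr ?_ * ?_ ^ _
        exact Set.abs_sub_left_of_mem_uIcc hs))
      Set.left_mem_uIcc Set.right_mem_uIcc
    rwa [hzero j hj, sub_zero, Real.norm_eq_abs, Real.norm_eq_abs, mul_assoc, ← pow_succ,
      show d - (j + 1) + 1 = d - j by omega] at hle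

end taylorRemainder

theorem abs_taylorRemainder_le {F : ℕ → ℝ → ℝ} {q j : ℕ} {x t B : ℝ} (hF : IsDerivChain F (2 * q))
    (hB : ∀ t ∈ Icc (0 : ℝ) 1, |F (2 * q) t| ≤ B) (hx : x ∈ Icc 0 1) (ht : t ∈ Icc 0 1)
    (hj : j ≤ 2 * q) :
    |taylorRemainder F (2 * q) x j t| ≤ B * (t - x) ^ (2 * (q - (j + 1) / 2)) := by
  have hB₀ : 0 ≤ B := (abs_nonneg _).trans (hB t ht)
  have htx : |t - x| ≤ 1 := Real.dist_le_of_mem_Icc_01 ht hx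
  have hR : ∀ t ∈ Icc (0 : ℝ) 1, |taylorRemainder F (2 * q) x (2 * q) t| ≤ B := by
    simpa only [taylorRemainder_top] using hB
  calc |taylorRemainder F (2 * q) x j t|
      ≤ B * |t - x| ^ (2 * q - j) := (hF.taylorRemainder x).abs_le_mul_pow hR hx
        (fun j hj => taylorRemainder_self F x hj) hj ht
    _ ≤ B * |t - x| ^ (2 * (q - (j + 1) / 2)) := by
        gcongr B * ?_
        exact pow_le_pow_of_le_one (abs_nonneg _) htx (by omega)
    _ = B * (t - x) ^ (2 * (q - (j + 1) / 2)) := by rw [(even_two_mul _).pow_abs]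

theorem abs_shiftedDurrmeyer_taylorRemainder_le {F : ℕ → ℝ → ℝ} {q j : ℕ} {x B : ℝ} (m α β : ℕ)
    (hF : IsDerivChain F (2 * q)) (hB : ∀ t ∈ Icc (0 : ℝ) 1, |F (2 * q) t| ≤ B) (hx : x ∈ Icc 0 1)
    (hj : j ≤ 2 * q) :
    |shiftedDurrmeyer m α β (taylorRemainder F (2 * q) x j) x| ≤
      B * centralMoment m α β (2 * (q - (j + 1) / 2)) x := by
  rw [centralMoment, ← shiftedDurrmeyer_const_mul]
  exact abs_shiftedDurrmeyer_le ((hF.taylorRemainder x).continuousOn j hj) (by fun_prop)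
    (fun t ht => abs_taylorRemainder_le hF hB hx ht hj) hx

theorem exists_abs_DM3_taylorRemainder_le {F : ℕ → ℝ → ℝ} {q : ℕ} (hq : 2 ≤ q)
    (hF : IsDerivChain F (2 * q)) : ∃ C : ℝ, ∀ m : ℕ, ∀ x ∈ Icc (0 : ℝ) 1,
      |DM3 (m + 4) (taylorRemainder F (2 * q) x 0) x| ≤ C / (m + 4) ^ q := by
  obtain ⟨B, hB⟩ := isCompact_Icc.exists_bound_of_continuousOn (hF.continuousOn (2 * q) le_rfl)
  have hB₀ : 0 ≤ B := (norm_nonneg _).trans (hB 0 (Set.left_mem_Icc.2 zero_le_one))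
  choose C hC₀ hC using fun j => exists_abs_centralMoment_le (2 * (q - (j + 1) / 2)) j 4
  refine ⟨500 * ∑ j ∈ range 5, B * C j, fun m x hx => abs_DM3_le_of_isDerivChain hq
    ((hF.taylorRemainder x).mono (by omega)) hx fun j hj => ?_⟩
  have hj' : j ≤ 2 * q := by have := Finset.mem_range.1 hj; omega
  have hCj := hC₀ j
  have hmoment := hC j m x hx
  rw [show (2 * (q - (j + 1) / 2) + 1) / 2 = q - (j + 1) / 2 by omega] at hmoment
  calc |shiftedDurrmeyer m j 4 (taylorRemainder F (2 * q) x j) x|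
      ≤ B * |centralMoment m j 4 (2 * (q - (j + 1) / 2)) x| :=
        (abs_shiftedDurrmeyer_taylorRemainder_le m j 4 hF hB hx hj').trans
          (mul_le_mul_of_nonneg_left (le_abs_self _) hB₀)
    _ ≤ B * (C j / (m + 4) ^ (q - (j + 1) / 2)) := by
        gcongr
        refine hmoment.trans ?_
        gcongr _ / ?_ ^ _
        push_cast
        linarith [j.cast_nonneg (α := ℝ)]
    _ ≤ (∑ j ∈ range 5, B * C j) / (m + 4) ^ (q - (j + 1) / 2) := by
        rw [← mul_div_assoc]
        gcongr
        exact Finset.single_le_sum (f := fun j => B * C j)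
          (fun j _ => mul_nonneg hB₀ (hC₀ j)) hj

theorem DM3_eq_DM3_taylorRemainder_add {F : ℕ → ℝ → ℝ} {d : ℕ} (n : ℕ) (hF : IsDerivChain F d)
    (x : ℝ) : DM3 n (F 0) x = DM3 n (taylorRemainder F d x 0) x +
      ∑ r ∈ range d, F r x / r.factorial * DM3 n (fun t => (t - x) ^ r) x := by
  rw [← DM3_sum_const_mul _ _ fun r => by fun_prop,
    ← DM3_add ((hF.taylorRemainder x).continuousOn 0 d.zero_le) (by fun_prop)]
  simp only [taylorRemainder, Nat.descFactorial_zero, Nat.cast_one, one_mul, Nat.sub_zero,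
    sub_add_cancel]

theorem exists_abs_DM3_sub_le {F : ℕ → ℝ → ℝ} (hF : IsDerivChain F 6) :
    ∃ C : ℝ, ∀ m : ℕ, ∀ x ∈ Icc (0 : ℝ) 1,
      |DM3 (m + 4) (F 0) x - F 0 x| ≤ C / (m + 4) ^ 3 := by
  obtain ⟨A₄, hA₄⟩ := isCompact_Icc.exists_bound_of_continuousOn (hF.continuousOn 4 (by omega))
  obtain ⟨A₅, hA₅⟩ := isCompact_Icc.exists_bound_of_continuousOn (hF.continuousOn 5 (by omega))
  obtain ⟨C, hC⟩ := exists_abs_DM3_taylorRemainder_le (q := 3) (by omega) hF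
  obtain ⟨C₅, hC₅⟩ := exists_abs_DM3_sub_pow_le (r := 5) (by omega)
  refine ⟨C + A₄ / (4).factorial * 100 + A₅ / (5).factorial * C₅, fun m x hx => ?_⟩
  have htaylor : DM3 (m + 4) (F 0) x - F 0 x = DM3 (m + 4) (taylorRemainder F 6 x 0) x +
      F 4 x / (4).factorial * DM3 (m + 4) (fun t => (t - x) ^ 4) x +
      F 5 x / (5).factorial * DM3 (m + 4) (fun t => (t - x) ^ 5) x := by
    rw [DM3_eq_DM3_taylorRemainder_add (m + 4) hF]
    simp only [Finset.sum_range_succ, Finset.sum_range_zero, pow_zero, pow_one, DM3_one, DM3_sub,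
      DM3_sub_sq, DM3_sub_cube, Nat.factorial_zero, Nat.cast_one]
    ring
  rw [htaylor, add_div, add_div, mul_div_assoc, mul_div_assoc]
  refine (abs_add_three _ _ _).trans ?_
  rw [abs_mul, abs_mul, abs_div, abs_div, Nat.abs_cast, Nat.abs_cast]
  have hA₄₀ := (abs_nonneg _).trans (hA₄ x hx)
  have hA₅₀ := (abs_nonneg _).trans (hA₅ x hx)
  gcongr
  exacts [hC m x hx, hA₄ x hx, abs_DM3_sub_pow_four_le m hx, hA₅ x hx, hC₅ m x hx]

theorem DM3_vanishing_moments_and_order_general :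
    (∀ n : ℕ, 4 ≤ n → ∀ x : ℝ,
      DM3 n (fun t => t - x) x = 0 ∧
      DM3 n (fun t => (t - x) ^ 2) x = 0 ∧
      DM3 n (fun t => (t - x) ^ 3) x = 0) ∧
    (∀ f : ℝ → ℝ, ContDiffOn ℝ 6 f (Icc 0 1) →
      ∃ C > (0 : ℝ), ∀ n : ℕ, 4 ≤ n → ∀ x ∈ Icc (0 : ℝ) 1,
        |DM3 n f x - f x| ≤ C / (n : ℝ) ^ 3) := by
  refine ⟨fun n hn x => ?_, fun f hf => ?_⟩
  · obtain ⟨m, rfl⟩ := Nat.exists_eq_add_of_le' hn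
    exact ⟨DM3_sub m x, DM3_sub_sq m x, DM3_sub_cube m x⟩
  · obtain ⟨C, hC⟩ := exists_abs_DM3_sub_le (isDerivChain_iteratedDerivWithin (d := 6) hf)
    refine ⟨max C 1, by positivity, fun n hn x hx => ?_⟩
    obtain ⟨m, rfl⟩ := Nat.exists_eq_add_of_le' hn
    have h := hC m x hx
    rw [iteratedDerivWithin_zero] at h
    push_cast
    exact h.trans (by gcongr; exact le_max_left C 1)

theorem DM3_vanishing_moments_and_order :
    (∀ n : ℕ, 8 ≤ n → ∀ x ∈ Set.Icc (0:ℝ) 1,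
      DM3 n (fun t => t - x) x = 0 ∧
      DM3 n (fun t => (t - x) ^ 2) x = 0 ∧
      DM3 n (fun t => (t - x) ^ 3) x = 0) ∧
    (∀ f : ℝ → ℝ, ContDiffOn ℝ 10 f (Set.Icc 0 1) → ∀ x ∈ Set.Icc (0:ℝ) 1,
      ∃ C > (0:ℝ), ∃ N : ℕ, ∀ n : ℕ, N ≤ n →
        |DM3 n f x - f x| ≤ C / (n : ℝ) ^ 3) := by
  obtain ⟨hmoments, horder⟩ := DM3_vanishing_moments_and_order_general
  refine ⟨fun n hn x _ => hmoments n (by omega) x, fun f hf x hx => ?_⟩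
  obtain ⟨C, hC₀, hC⟩ := horder f (hf.of_le (by norm_num))
  exact ⟨C, hC₀, 4, fun n hn => hC n hn x hx⟩
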